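/- arXiv:2009.00329 — 2 statements merged into one kernel-verified Lean document; each statement's English description precedes it below -/
import Mathlib

section
/- For every fixed ratio r ∈ (1/2, 1] there exist constants c ∈ (1, 2] and K > 0 such that for all positive integers d, setting t = ⌈r d⌉, one has (d − t) · C(d,t) · (1/2)^{d−1} ≤ K / c^d. Consequently, for independent standard Gaussian gradient vectors g_1, …, g_d in ℝⁿ and the AND-mask m_t with threshold t = ⌈r d⌉, E‖m_t ⊙ ((1/d) Σ_e g_e)‖² ≤ O(n / c^d), whereas E‖(1/d) Σ_e g_e‖² = n/d decays only linearly in d. -/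
open MeasureTheory ProbabilityTheory

/-!
Exponential tilting. For `a ≥ 1`, the indicator of the event that at least `t` of `d` numbers are
positive or at least `t` are negative is at most `a⁻ᵗ (a ^ #positive + a ^ #negative)`, and the
square of the average is at most the average of the squares. So it is enough to bound
`E[a ^ #positive * Yᵢ²]`, which factors by independence. For a symmetric law, pairing `x` with `-x`
shows that the weight `a` on the positive half-line multiplies the integral of an even function by
at most `(1 + a) / 2`, and the mask bound `2 ((1 + a) / 2) ^ d / a ^ t` follows. The same quantity
`((1 + a) / 2) ^ d / a ^ t` dominates `C(d,t) / 2 ^ d`, since `C(d,t) aᵗ` is a term of the expansion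
of `(1 + a) ^ d`. With `t ≥ (1/2 + δ) d` and `a = exp (4 δ)` it is at most `exp (-2 δ² d)`; one
factor `exp (-δ² d)` absorbs the prefactor `d` and the other one is the rate `c ^ (-d)`.
-/

open Finset in
/-- The component of the AND-mask `m_t` at a coordinate where the gradients take the values `x e`:
`1` if at least `t` of them are positive or at least `t` are negative, and `0` otherwise. -/
noncomputable def andMask {ι : Type*} [Fintype ι] (t : ℕ) (x : ι → ℝ) : ℝ :=
  if t ≤ #{e | 0 < x e} ∨ t ≤ #{e | x e < 0} then 1 else 0

section SetCounting

open Finset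

variable {ι α : Type*} [Fintype ι] {s : Set α} [DecidablePred (· ∈ s)]

lemma prod_mulIndicator_const {M : Type*} [CommMonoid M] (a : M) (y : ι → α) :
    ∏ e, s.mulIndicator (fun _ ↦ a) (y e) = a ^ #{e | y e ∈ s} := by
  classical
  simp [Set.mulIndicator_apply, prod_ite]

lemma measurable_card_filter_mem [MeasurableSpace α] (hs : MeasurableSet s) :
    Measurable fun y : ι → α ↦ #{e | y e ∈ s} := by
  simp only [card_filter]
  exact measurable_fun_sum _ fun e _ ↦
    .ite (measurable_pi_apply e hs) measurable_const measurable_const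

end SetCounting

section Tilting

open Finset

lemma mulIndicator_const_add_mulIndicator_const_neg_le {G : Type*} [InvolutiveNeg G] {s : Set G}
    {a : ℝ} (hs : Disjoint s (-s)) (ha : 1 ≤ a) (x : G) :
    s.mulIndicator (fun _ ↦ a) x + s.mulIndicator (fun _ ↦ a) (-x) ≤ 1 + a := by
  have hx : x ∈ s → -x ∉ s := fun hxs hxn ↦ Set.disjoint_left.mp hs hxs hxn
  by_cases hxs : x ∈ s
  · simp [hxs, hx hxs, add_comm]
  · by_cases hxn : -x ∈ s <;> simp [hxs, hxn, ha]

lemma measurable_mulIndicator_const {α M : Type*} [MeasurableSpace α] [MeasurableSpace M] [One M]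
    {s : Set α} (hs : MeasurableSet s) (a : M) : Measurable (s.mulIndicator fun _ ↦ a) := by
  classical
  rw [← Set.piecewise_eq_mulIndicator]
  exact measurable_const.piecewise hs measurable_const

variable {ι Ω G : Type*} [Fintype ι] [MeasurableSpace Ω] {μ : Measure Ω}
  [AddGroup G] [MeasurableSpace G] [MeasurableNeg G] {s : Set G} {a : ℝ}

lemma integral_mulIndicator_mul_le_of_even {ν : Measure G} [ν.IsNegInvariant]
    {h : G → ℝ} (hs : MeasurableSet s) (hdisj : Disjoint s (-s)) (ha : 1 ≤ a)
    (hnonneg : 0 ≤ h) (heven : h.Even) (hint : Integrable h ν) :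
    ∫ x, s.mulIndicator (fun _ ↦ a) x * h x ∂ν ≤ (1 + a) / 2 * ∫ x, h x ∂ν := by
  set w : G → ℝ := s.mulIndicator fun _ ↦ a
  have hw_bound (x : G) : ‖w x‖ ≤ a := by
    by_cases hx : x ∈ s <;> simp [w, hx, ha, abs_of_nonneg (zero_le_one.trans ha)]
  have hw_meas : Measurable w := measurable_mulIndicator_const hs a
  have hw_int : Integrable (fun x ↦ w x * h x) ν :=
    hint.bdd_mul hw_meas.aestronglyMeasurable (ae_of_all _ hw_bound)
  have hw_neg_int : Integrable (fun x ↦ w (-x) * h x) ν := by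
    simpa only [heven _] using hw_int.comp_neg
  have hw_neg : ∫ x, w (-x) * h x ∂ν = ∫ x, w x * h x ∂ν := by
    simpa only [heven _] using integral_neg_eq_self (fun x ↦ w x * h x) ν
  have hpair : ∫ x, w x * h x ∂ν + ∫ x, w (-x) * h x ∂ν ≤ (1 + a) * ∫ x, h x ∂ν := by
    rw [← integral_add hw_int hw_neg_int, ← integral_const_mul]
    refine integral_mono (hw_int.add hw_neg_int) (hint.const_mul _) fun x ↦ ?_
    rw [← add_mul]
    exact mul_le_mul_of_nonneg_right
      (mulIndicator_const_add_mulIndicator_const_neg_le hdisj ha x) (hnonneg x)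
  linarith

lemma integral_pow_card_mul_prod_le_of_even [DecidablePred (· ∈ s)]
    {Y : ι → Ω → G} {h : ι → G → ℝ} (hs : MeasurableSet s) (hdisj : Disjoint s (-s)) (ha : 1 ≤ a)
    (hY : ∀ e, AEMeasurable (Y e) μ) (hindep : iIndepFun Y μ)
    (hsymm : ∀ e, (μ.map (Y e)).IsNegInvariant) (hnonneg : ∀ e, 0 ≤ h e) (heven : ∀ e, (h e).Even)
    (hint : ∀ e, Integrable (h e) (μ.map (Y e))) :
    ∫ ω, a ^ #{e | Y e ω ∈ s} * ∏ e, h e (Y e ω) ∂μ ≤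
      ((1 + a) / 2) ^ Fintype.card ι * ∏ e, ∫ ω, h e (Y e ω) ∂μ := by
  set w : G → ℝ := s.mulIndicator fun _ ↦ a
  have hw_nonneg (x : G) : 0 ≤ w x :=
    zero_le_one.trans (Set.one_le_mulIndicator_apply fun _ ↦ ha)
  have hw_meas : Measurable w := measurable_mulIndicator_const hs a
  have hwh_meas (e : ι) : AEStronglyMeasurable (fun x ↦ w x * h e x) (μ.map (Y e)) :=
    hw_meas.aestronglyMeasurable.mul (hint e).1
  calc ∫ ω, a ^ #{e | Y e ω ∈ s} * ∏ e, h e (Y e ω) ∂μ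
      = ∫ ω, ∏ e, w (Y e ω) * h e (Y e ω) ∂μ := by
        simp only [prod_mul_distrib, w, prod_mulIndicator_const]
    _ = ∏ e, ∫ ω, w (Y e ω) * h e (Y e ω) ∂μ := hindep.integral_fun_prod_comp hY hwh_meas
    _ ≤ ∏ e, (1 + a) / 2 * ∫ ω, h e (Y e ω) ∂μ := by
        refine prod_le_prod (fun e _ ↦ integral_nonneg fun ω ↦
          mul_nonneg (hw_nonneg _) (hnonneg e _)) fun e _ ↦ ?_
        rw [← integral_map (hY e) (hwh_meas e), ← integral_map (hY e) (hint e).1]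
        exact integral_mulIndicator_mul_le_of_even hs hdisj ha (hnonneg e) (heven e) (hint e)
    _ = ((1 + a) / 2) ^ Fintype.card ι * ∏ e, ∫ ω, h e (Y e ω) ∂μ := by
        rw [prod_mul_distrib, prod_const, card_univ]

end Tilting

section SymmetricVariables

open Finset

variable {ι Ω : Type*} [Fintype ι] [MeasurableSpace Ω] {μ : Measure Ω} {Y : ι → Ω → ℝ}
  {s : Set ℝ} [DecidablePred (· ∈ s)] {a : ℝ}

lemma integrable_pow_card_mul_sq (hs : MeasurableSet s) (ha : 1 ≤ a)
    (hY : ∀ e, AEMeasurable (Y e) μ) {i : ι} (hYi : MemLp (Y i) 2 μ) :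
    Integrable (fun ω ↦ a ^ #{e | Y e ω ∈ s} * Y i ω ^ 2) μ := by
  have hcard : AEMeasurable (fun ω ↦ #{e | Y e ω ∈ s}) μ :=
    (measurable_card_filter_mem hs).comp_aemeasurable (aemeasurable_pi_lambda _ hY)
  refine hYi.integrable_sq.bdd_mul (c := a ^ Fintype.card ι)
    (hcard.const_pow a).aestronglyMeasurable (ae_of_all _ fun ω ↦ ?_)
  rw [Real.norm_of_nonneg (by positivity)]
  exact pow_le_pow_right₀ ha (card_le_univ _)

lemma integral_pow_card_mul_sq_le (hs : MeasurableSet s) (hdisj : Disjoint s (-s)) (ha : 1 ≤ a)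
    (hY : ∀ e, AEMeasurable (Y e) μ) (hindep : iIndepFun Y μ)
    (hsymm : ∀ e, (μ.map (Y e)).IsNegInvariant) {i : ι} (hYi : MemLp (Y i) 2 μ) :
    ∫ ω, a ^ #{e | Y e ω ∈ s} * Y i ω ^ 2 ∂μ ≤
      ((1 + a) / 2) ^ Fintype.card ι * ∫ ω, Y i ω ^ 2 ∂μ := by
  classical
  have := hindep.isProbabilityMeasure
  let h : ι → ℝ → ℝ := fun e x ↦ if e = i then x ^ 2 else 1
  have hint (e : ι) : Integrable (h e) (μ.map (Y e)) := by
    have := Measure.isProbabilityMeasure_map (hY e)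
    by_cases he : e = i
    · subst he
      have hsq : AEStronglyMeasurable (fun x : ℝ ↦ x ^ 2) (μ.map (Y e)) := by fun_prop
      simpa only [h, if_true] using (integrable_map_measure hsq (hY e)).mpr hYi.integrable_sq
    · simp only [h, he, if_false, integrable_const]
  have hbound := integral_pow_card_mul_prod_le_of_even hs hdisj ha hY hindep hsymm (h := h)
    (fun e x ↦ by by_cases he : e = i <;> simp [h, he, sq_nonneg])
    (fun e x ↦ by simp [h]) hint
  have hprod : ∏ e, ∫ ω, h e (Y e ω) ∂μ = ∫ ω, Y i ω ^ 2 ∂μ := by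
    rw [Fintype.prod_eq_single i fun e he ↦ by simp [h, he]]
    simp only [h, if_true]
  simpa only [hprod, h, prod_ite_eq', mem_univ, if_true] using hbound

end SymmetricVariables

section SecondMoments

variable {ι Ω : Type*} [Fintype ι] [MeasurableSpace Ω] {μ : Measure Ω}

lemma integral_eq_zero_of_isNegInvariant_map {E : Type*} [NormedAddCommGroup E] [NormedSpace ℝ E]
    [MeasurableSpace E] [BorelSpace E] [SecondCountableTopology E] {Z : Ω → E}
    (hZ : AEMeasurable Z μ) [(μ.map Z).IsNegInvariant] : ∫ ω, Z ω ∂μ = 0 := by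
  have hlaw : ∫ ω, Z ω ∂μ = ∫ x, x ∂μ.map Z :=
    (integral_map hZ aestronglyMeasurable_id).symm
  have hneg := integral_neg_eq_self (fun x : E ↦ x) (μ.map Z)
  rw [integral_neg] at hneg
  have : IsAddTorsionFree E := .of_isTorsionFree ℝ E
  rw [hlaw]
  exact self_eq_neg.mp hneg.symm

lemma integral_sq_sum_eq_sum_integral_sq {Y : ι → Ω → ℝ} [IsProbabilityMeasure μ]
    (hY : ∀ e, MemLp (Y e) 2 μ) (hindep : Pairwise fun e e' ↦ Y e ⟂ᵢ[μ] Y e')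
    (hmean : ∀ e, ∫ ω, Y e ω ∂μ = 0) :
    ∫ ω, (∑ e, Y e ω) ^ 2 ∂μ = ∑ e, ∫ ω, Y e ω ^ 2 ∂μ := by
  have hmean_sum : ∫ ω, (∑ e, Y e) ω ∂μ = 0 := by
    simp only [Finset.sum_apply]
    rw [integral_finsetSum _ fun e _ ↦ (hY e).integrable one_le_two]
    exact Finset.sum_eq_zero fun e _ ↦ hmean e
  have hmeas (e : ι) : AEMeasurable (Y e) μ := (hY e).aemeasurable
  have hvar := IndepFun.variance_sum (X := Y) (s := Finset.univ) (fun e _ ↦ hY e)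
    fun e _ e' _ hne ↦ hindep hne
  rw [variance_of_integral_eq_zero (by fun_prop) hmean_sum] at hvar
  simpa only [Finset.sum_apply, variance_of_integral_eq_zero (hmeas _) (hmean _)] using hvar

lemma integral_sq_mean_eq_one_div_card {Y : ι → Ω → ℝ} [Nonempty ι] [IsProbabilityMeasure μ]
    (hY : ∀ e, MemLp (Y e) 2 μ) (hindep : Pairwise fun e e' ↦ Y e ⟂ᵢ[μ] Y e')
    (hmean : ∀ e, ∫ ω, Y e ω ∂μ = 0) (hunit : ∀ e, ∫ ω, Y e ω ^ 2 ∂μ = 1) :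
    ∫ ω, (1 / Fintype.card ι * ∑ e, Y e ω) ^ 2 ∂μ = (1 / Fintype.card ι : ℝ) := by
  simp only [mul_pow]
  rw [integral_const_mul, integral_sq_sum_eq_sum_integral_sq hY hindep hmean]
  simp only [hunit, Finset.sum_const, Finset.card_univ, nsmul_one]
  field_simp

end SecondMoments

section AndMask

open Finset

variable {ι Ω : Type*} [Fintype ι] [MeasurableSpace Ω] {μ : Measure Ω} {Y : ι → Ω → ℝ} {a : ℝ}

lemma sq_andMask (t : ℕ) (x : ι → ℝ) : andMask t x ^ 2 = andMask t x := by
  simp [andMask]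

lemma abs_andMask_le_one (t : ℕ) (x : ι → ℝ) : |andMask t x| ≤ 1 := by
  unfold andMask
  split_ifs <;> simp

lemma measurable_andMask (t : ℕ) : Measurable (andMask t : (ι → ℝ) → ℝ) :=
  .ite ((measurableSet_le measurable_const (measurable_card_filter_mem measurableSet_Ioi)).union
    (measurableSet_le measurable_const (measurable_card_filter_mem measurableSet_Iio)))
    measurable_const measurable_const

lemma integrable_pow_card_pos_add_pow_card_neg_mul_sq (ha : 1 ≤ a)
    (hY : ∀ e, AEMeasurable (Y e) μ) {i : ι} (hYi : MemLp (Y i) 2 μ) :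
    Integrable (fun ω ↦ (a ^ #{e | 0 < Y e ω} + a ^ #{e | Y e ω < 0}) * Y i ω ^ 2) μ := by
  simp only [add_mul]
  exact (integrable_pow_card_mul_sq (s := Set.Ioi 0) measurableSet_Ioi ha hY hYi).add
    (integrable_pow_card_mul_sq (s := Set.Iio 0) measurableSet_Iio ha hY hYi)

lemma integral_pow_card_pos_add_pow_card_neg_mul_sq_le (ha : 1 ≤ a)
    (hY : ∀ e, AEMeasurable (Y e) μ) (hindep : iIndepFun Y μ)
    (hsymm : ∀ e, (μ.map (Y e)).IsNegInvariant) {i : ι} (hYi : MemLp (Y i) 2 μ) :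
    ∫ ω, (a ^ #{e | 0 < Y e ω} + a ^ #{e | Y e ω < 0}) * Y i ω ^ 2 ∂μ ≤
      2 * ((1 + a) / 2) ^ Fintype.card ι * ∫ ω, Y i ω ^ 2 ∂μ := by
  have hpos := integral_pow_card_mul_sq_le (s := Set.Ioi 0) measurableSet_Ioi (by simp) ha hY
    hindep hsymm hYi
  have hneg := integral_pow_card_mul_sq_le (s := Set.Iio 0) measurableSet_Iio (by simp) ha hY
    hindep hsymm hYi
  have hpos_int : Integrable (fun ω ↦ a ^ #{e | 0 < Y e ω} * Y i ω ^ 2) μ :=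
    integrable_pow_card_mul_sq (s := Set.Ioi 0) measurableSet_Ioi ha hY hYi
  have hneg_int : Integrable (fun ω ↦ a ^ #{e | Y e ω < 0} * Y i ω ^ 2) μ :=
    integrable_pow_card_mul_sq (s := Set.Iio 0) measurableSet_Iio ha hY hYi
  simp only [add_mul]
  rw [integral_add hpos_int hneg_int, mul_assoc, two_mul]
  exact add_le_add hpos hneg

lemma andMask_mul_pow_le (ha : 1 ≤ a) (t : ℕ) (x : ι → ℝ) :
    andMask t x * a ^ t ≤ a ^ #{e | 0 < x e} + a ^ #{e | x e < 0} := by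
  unfold andMask
  split_ifs with hagree
  · rw [one_mul]
    rcases hagree with hpos | hneg
    · exact (pow_le_pow_right₀ ha hpos).trans (le_add_of_nonneg_right (by positivity))
    · exact (pow_le_pow_right₀ ha hneg).trans (le_add_of_nonneg_left (by positivity))
  · rw [zero_mul]
    positivity

lemma sq_andMask_mul_mean_le (ha : 1 ≤ a) (t : ℕ) (x : ι → ℝ) :
    (andMask t x * (1 / Fintype.card ι * ∑ e, x e)) ^ 2 ≤
      1 / (Fintype.card ι * a ^ t) *
        ∑ e, (a ^ #{e | 0 < x e} + a ^ #{e | x e < 0}) * x e ^ 2 := by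
  have hmask : andMask t x ≤ (a ^ #{e | 0 < x e} + a ^ #{e | x e < 0}) / a ^ t :=
    (le_div_iff₀ (by positivity)).mpr (andMask_mul_pow_le ha t x)
  have hmean : (1 / Fintype.card ι * ∑ e, x e) ^ 2 ≤ (∑ e, x e ^ 2) / Fintype.card ι := by
    simpa only [one_div_mul_eq_div, card_univ] using
      sum_div_card_sq_le_sum_sq_div_card (s := univ) (f := x)
  calc (andMask t x * (1 / Fintype.card ι * ∑ e, x e)) ^ 2
      = andMask t x * (1 / Fintype.card ι * ∑ e, x e) ^ 2 := by rw [mul_pow, sq_andMask]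
    _ ≤ (a ^ #{e | 0 < x e} + a ^ #{e | x e < 0}) / a ^ t *
          ((∑ e, x e ^ 2) / Fintype.card ι) := by gcongr
    _ = _ := by
        rw [← mul_sum]
        ring

lemma integrable_sq_andMask_mul_mean (hY : ∀ e, MemLp (Y e) 2 μ) (t : ℕ) :
    Integrable (fun ω ↦ (andMask t (Y · ω) * (1 / Fintype.card ι * ∑ e, Y e ω)) ^ 2) μ := by
  have hmean : MemLp (fun ω ↦ 1 / (Fintype.card ι : ℝ) * ∑ e, Y e ω) 2 μ :=
    (memLp_finsetSum _ fun e _ ↦ hY e).const_mul _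
  have hmask : AEMeasurable (fun ω ↦ andMask t (Y · ω)) μ :=
    (measurable_andMask t).comp_aemeasurable (aemeasurable_pi_lambda _ fun e ↦ (hY e).aemeasurable)
  simp only [mul_pow, sq_andMask _ (Y · _)]
  simpa only [mul_pow] using hmean.integrable_sq.bdd_mul hmask.aestronglyMeasurable
    (ae_of_all _ fun ω ↦ abs_andMask_le_one t (Y · ω))

lemma integral_sq_andMask_mul_mean_le (ha : 1 ≤ a) (hY : ∀ e, MemLp (Y e) 2 μ)
    (hindep : iIndepFun Y μ) (hsymm : ∀ e, (μ.map (Y e)).IsNegInvariant) (t : ℕ) :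
    ∫ ω, (andMask t (Y · ω) * (1 / Fintype.card ι * ∑ e, Y e ω)) ^ 2 ∂μ ≤
      2 * (((1 + a) / 2) ^ Fintype.card ι / a ^ t) *
        (1 / Fintype.card ι * ∑ e, ∫ ω, Y e ω ^ 2 ∂μ) := by
  have hmeas (e : ι) : AEMeasurable (Y e) μ := (hY e).aemeasurable
  have hint (i : ι) := integrable_pow_card_pos_add_pow_card_neg_mul_sq ha hmeas (hY i)
  calc ∫ ω, (andMask t (Y · ω) * (1 / Fintype.card ι * ∑ e, Y e ω)) ^ 2 ∂μ
      ≤ ∫ ω, 1 / (Fintype.card ι * a ^ t) *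
          ∑ i, (a ^ #{e | 0 < Y e ω} + a ^ #{e | Y e ω < 0}) * Y i ω ^ 2 ∂μ :=
        integral_mono (integrable_sq_andMask_mul_mean hY t)
          ((integrable_finsetSum _ fun i _ ↦ hint i).const_mul _)
          fun ω ↦ sq_andMask_mul_mean_le ha t (Y · ω)
    _ = 1 / (Fintype.card ι * a ^ t) *
          ∑ i, ∫ ω, (a ^ #{e | 0 < Y e ω} + a ^ #{e | Y e ω < 0}) * Y i ω ^ 2 ∂μ := by
        rw [integral_const_mul, integral_finsetSum _ fun i _ ↦ hint i]
    _ ≤ 1 / (Fintype.card ι * a ^ t) *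
          ∑ i, 2 * ((1 + a) / 2) ^ Fintype.card ι * ∫ ω, Y i ω ^ 2 ∂μ := by
        gcongr with i
        exact integral_pow_card_pos_add_pow_card_neg_mul_sq_le ha hmeas hindep hsymm (hY i)
    _ = _ := by
        rw [← mul_sum]
        ring

end AndMask

section ChernoffBound

open Real

lemma one_add_exp_two_mul_div_two_le (x : ℝ) : (1 + exp (2 * x)) / 2 ≤ exp (x + x ^ 2 / 2) :=
  calc (1 + exp (2 * x)) / 2 = exp x * cosh x := by
        rw [cosh_eq, two_mul, exp_add, exp_neg]
        field_simp
        ring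
    _ ≤ exp x * exp (x ^ 2 / 2) := by gcongr; exact cosh_le_exp_half_sq x
    _ = exp (x + x ^ 2 / 2) := (exp_add _ _).symm

lemma choose_mul_pow_le_one_add_pow {a : ℝ} (ha : 0 ≤ a) (d t : ℕ) :
    d.choose t * a ^ t ≤ (1 + a) ^ d := by
  rcases le_or_gt t d with htd | hdt
  · rw [add_comm, add_pow]
    simpa [mul_comm] using Finset.single_le_sum (s := Finset.range (d + 1))
      (f := fun m ↦ a ^ m * 1 ^ (d - m) * (d.choose m : ℝ)) (fun m _ ↦ by positivity)
      (Finset.mem_range_succ_iff.mpr htd)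
  · rw [Nat.choose_eq_zero_of_lt hdt, Nat.cast_zero, zero_mul]
    positivity

variable {δ : ℝ} {d t : ℕ}

lemma one_add_exp_div_two_pow_div_exp_pow_le (hδ : 0 ≤ δ) (ht : (1 / 2 + δ) * d ≤ t) :
    ((1 + exp (4 * δ)) / 2) ^ d / exp (4 * δ) ^ t ≤ exp (-(2 * (δ ^ 2 * d))) := by
  have hbase : (1 + exp (4 * δ)) / 2 ≤ exp (2 * δ + 2 * δ ^ 2) := by
    convert one_add_exp_two_mul_div_two_le (2 * δ) using 3 <;> ring_nf
  rw [div_le_iff₀ (by positivity)]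
  calc ((1 + exp (4 * δ)) / 2) ^ d ≤ exp (2 * δ + 2 * δ ^ 2) ^ d := by gcongr
    _ = exp (-(2 * (δ ^ 2 * d)) + 4 * δ * ((1 / 2 + δ) * d)) := by
        rw [← exp_nat_mul]
        ring_nf
    _ ≤ exp (-(2 * (δ ^ 2 * d)) + 4 * δ * t) := by gcongr
    _ = exp (-(2 * (δ ^ 2 * d))) * exp (4 * δ) ^ t := by
        rw [exp_add, ← exp_nat_mul, mul_comm (4 * δ)]

lemma natCast_mul_exp_neg_two_mul_le {x : ℝ} (hx : 0 < x) (d : ℕ) :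
    d * exp (-(2 * (x * d))) ≤ 1 / x / exp x ^ d := by
  have hlin : x * d ≤ exp (x * d) := (le_add_of_nonneg_right zero_le_one).trans (add_one_le_exp _)
  have hpow : exp x ^ d = exp (x * d) := by rw [← exp_nat_mul, mul_comm]
  rw [hpow, div_div, le_div_iff₀ (by positivity)]
  calc d * exp (-(2 * (x * d))) * (x * exp (x * d))
      = x * d * (exp (-(2 * (x * d))) * exp (x * d)) := by ring
    _ = x * d * exp (-(x * d)) := by
        rw [← exp_add]
        ring_nf
    _ ≤ exp (x * d) * exp (-(x * d)) := by gcongr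
    _ = 1 := by rw [← exp_add, add_neg_cancel, exp_zero]

lemma natCast_mul_one_add_exp_div_two_pow_div_exp_pow_le (hδ : 0 < δ)
    (ht : (1 / 2 + δ) * d ≤ t) :
    d * (((1 + exp (4 * δ)) / 2) ^ d / exp (4 * δ) ^ t) ≤ 1 / δ ^ 2 / exp (δ ^ 2) ^ d :=
  (mul_le_mul_of_nonneg_left (one_add_exp_div_two_pow_div_exp_pow_le hδ.le ht)
    d.cast_nonneg).trans (natCast_mul_exp_neg_two_mul_le (by positivity) d)

lemma sub_mul_choose_mul_half_pow_le (hδ : 0 < δ) (ht : (1 / 2 + δ) * d ≤ t) :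
    ((d : ℝ) - t) * d.choose t * (1 / 2) ^ (d - 1) ≤ 2 / δ ^ 2 / exp (δ ^ 2) ^ d := by
  set a := exp (4 * δ)
  have hhalf : (1 / 2 : ℝ) ^ (d - 1) ≤ 2 * (1 / 2) ^ d := by
    cases d with
    | zero => norm_num
    | succ k => rw [Nat.add_sub_cancel, pow_succ']; linarith
  have hchoose : d.choose t * (1 / 2) ^ d ≤ ((1 + a) / 2) ^ d / a ^ t := by
    rw [le_div_iff₀ (by positivity), div_pow (1 + a), one_div_pow, mul_one_div, div_mul_eq_mul_div]
    gcongr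
    exact choose_mul_pow_le_one_add_pow (by positivity) d t
  calc ((d : ℝ) - t) * d.choose t * (1 / 2) ^ (d - 1)
      ≤ d * d.choose t * (2 * (1 / 2) ^ d) := by
        gcongr
        exact sub_le_self _ t.cast_nonneg
    _ = 2 * (d * (d.choose t * (1 / 2) ^ d)) := by ring
    _ ≤ 2 * (d * (((1 + a) / 2) ^ d / a ^ t)) := by gcongr
    _ ≤ 2 * (1 / δ ^ 2 / exp (δ ^ 2) ^ d) := by
        gcongr
        exact natCast_mul_one_add_exp_div_two_pow_div_exp_pow_le hδ ht
    _ = _ := by ring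

end ChernoffBound

section UnitVariance

open Real

variable {ι Ω : Type*} [Fintype ι] [Nonempty ι] [MeasurableSpace Ω] {μ : Measure Ω}

lemma integral_sq_andMask_mul_mean_le_exp {Y : ι → Ω → ℝ} {δ : ℝ} {t : ℕ} (hδ : 0 < δ)
    (ht : (1 / 2 + δ) * Fintype.card ι ≤ t) (hY : ∀ e, MemLp (Y e) 2 μ) (hindep : iIndepFun Y μ)
    (hsymm : ∀ e, (μ.map (Y e)).IsNegInvariant) (hunit : ∀ e, ∫ ω, Y e ω ^ 2 ∂μ = 1) :
    ∫ ω, (andMask t (Y · ω) * (1 / Fintype.card ι * ∑ e, Y e ω)) ^ 2 ∂μ ≤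
      2 / δ ^ 2 / exp (δ ^ 2) ^ Fintype.card ι := by
  set b := ((1 + exp (4 * δ)) / 2) ^ Fintype.card ι / exp (4 * δ) ^ t
  have hcard : (1 : ℝ) ≤ Fintype.card ι := by exact_mod_cast Fintype.card_pos (α := ι)
  calc ∫ ω, (andMask t (Y · ω) * (1 / Fintype.card ι * ∑ e, Y e ω)) ^ 2 ∂μ
      ≤ 2 * b * (1 / Fintype.card ι * ∑ e, ∫ ω, Y e ω ^ 2 ∂μ) :=
        integral_sq_andMask_mul_mean_le (one_le_exp (by positivity)) hY hindep hsymm t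
    _ = 2 * b := by simp [hunit]
    _ ≤ 2 * (Fintype.card ι * b) := by
        gcongr
        exact le_mul_of_one_le_left (by positivity) hcard
    _ ≤ 2 * (1 / δ ^ 2 / exp (δ ^ 2) ^ Fintype.card ι) := by
        gcongr
        exact natCast_mul_one_add_exp_div_two_pow_div_exp_pow_le hδ ht
    _ = _ := by ring

variable {κ : Type*} [Fintype κ] {X : ι → κ → Ω → ℝ}

lemma integral_sum_sq_andMask_mul_mean_le_exp {δ : ℝ} {t : ℕ} (hδ : 0 < δ)
    (ht : (1 / 2 + δ) * Fintype.card ι ≤ t) (hX : ∀ e j, MemLp (X e j) 2 μ)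
    (hindep : ∀ j, iIndepFun (fun e ↦ X e j) μ) (hsymm : ∀ e j, (μ.map (X e j)).IsNegInvariant)
    (hunit : ∀ e j, ∫ ω, X e j ω ^ 2 ∂μ = 1) :
    ∫ ω, ∑ j, (andMask t (X · j ω) * (1 / Fintype.card ι * ∑ e, X e j ω)) ^ 2 ∂μ ≤
      2 / δ ^ 2 * Fintype.card κ / exp (δ ^ 2) ^ Fintype.card ι := by
  rw [integral_finsetSum _ fun j _ ↦ integrable_sq_andMask_mul_mean (hX · j) t]
  refine (Finset.sum_le_card_nsmul _ _ _ fun j _ ↦ integral_sq_andMask_mul_mean_le_exp hδ ht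
    (hX · j) (hindep j) (hsymm · j) (hunit · j)).trans_eq ?_
  rw [Finset.card_univ, nsmul_eq_mul]
  ring

lemma integral_sum_sq_mean_eq_card_div_card (hX : ∀ e j, MemLp (X e j) 2 μ)
    (hindep : ∀ j, iIndepFun (fun e ↦ X e j) μ) (hsymm : ∀ e j, (μ.map (X e j)).IsNegInvariant)
    (hunit : ∀ e j, ∫ ω, X e j ω ^ 2 ∂μ = 1) :
    ∫ ω, ∑ j, (1 / Fintype.card ι * ∑ e, X e j ω) ^ 2 ∂μ =
      (Fintype.card κ / Fintype.card ι : ℝ) := by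
  have hmean (e : ι) (j : κ) : ∫ ω, X e j ω ∂μ = 0 :=
    have := hsymm e j
    integral_eq_zero_of_isNegInvariant_map (hX e j).aemeasurable
  have hmean_sq (j : κ) :
      ∫ ω, (1 / Fintype.card ι * ∑ e, X e j ω) ^ 2 ∂μ = (1 / Fintype.card ι : ℝ) := by
    have := (hindep j).isProbabilityMeasure
    exact integral_sq_mean_eq_one_div_card (hX · j) (fun _ _ hne ↦ (hindep j).indepFun hne)
      (hmean · j) (hunit · j)
  rw [integral_finsetSum _ fun j _ ↦
    ((memLp_finsetSum _ fun e _ ↦ hX e j).const_mul _).integrable_sq]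
  simp only [hmean_sq, Finset.sum_const, Finset.card_univ, nsmul_eq_mul, mul_one_div]

end UnitVariance

section Gaussian

open scoped NNReal

lemma isNegInvariant_gaussianReal_zero (v : ℝ≥0) : (gaussianReal 0 v).IsNegInvariant where
  neg_eq_self := gaussianReal_map_neg.trans (by rw [neg_zero])

lemma integral_sq_eq_of_hasLaw_gaussianReal_zero {Ω : Type*} [MeasurableSpace Ω] {μ : Measure Ω}
    {Z : Ω → ℝ} {v : ℝ≥0} (hZ : HasLaw Z (gaussianReal 0 v) μ) : ∫ ω, Z ω ^ 2 ∂μ = v := by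
  have hmean : ∫ ω, Z ω ∂μ = 0 := by rw [hZ.integral_eq, integral_id_gaussianReal]
  rw [← variance_of_integral_eq_zero hZ.aemeasurable hmean, hZ.variance_eq,
    variance_id_gaussianReal]

end Gaussian

lemma exp_le_two_of_le_quarter {x : ℝ} (hx : x ≤ 1 / 4) : Real.exp x ≤ 2 := by
  rw [← Real.le_log_iff_exp_le two_pos]
  linarith [Real.log_two_gt_d9]

theorem and_mask_exponential_decay_of_random_gradients_general {r : ℝ} (hr : 1 / 2 < r) :
    ∃ c K : ℝ, 1 < c ∧ c ≤ 2 ∧ 0 < K ∧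
      ∀ d t : ℕ, 0 < d → r * d ≤ t →
        ((d : ℝ) - t) * d.choose t * (1 / 2) ^ (d - 1) ≤ K / c ^ d ∧
        ∀ (n : ℕ) (Ω : Type*) [MeasurableSpace Ω] (μ : Measure Ω) (X : Fin d → Fin n → Ω → ℝ),
          (∀ e j, MemLp (X e j) 2 μ) →
          (∀ j, iIndepFun (fun e ↦ X e j) μ) →
          (∀ e j, (μ.map (X e j)).IsNegInvariant) →
          (∀ e j, ∫ ω, X e j ω ^ 2 ∂μ = 1) →
          ∫ ω, ∑ j, (andMask t (X · j ω) * (1 / d * ∑ e, X e j ω)) ^ 2 ∂μ ≤ K * n / c ^ d ∧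
          ∫ ω, ∑ j, (1 / d * ∑ e, X e j ω) ^ 2 ∂μ = (n / d : ℝ) := by
  set δ := min (r - 1 / 2) (1 / 2)
  have hδ : 0 < δ := lt_min (by linarith) (by norm_num)
  have hδr : 1 / 2 + δ ≤ r := by linarith [min_le_left (r - 1 / 2) (1 / 2)]
  have hδ_sq : δ ^ 2 ≤ 1 / 4 := by nlinarith [min_le_right (r - 1 / 2) (1 / 2)]
  refine ⟨Real.exp (δ ^ 2), 2 / δ ^ 2, Real.one_lt_exp_iff.mpr (by positivity),
    exp_le_two_of_le_quarter hδ_sq, by positivity, fun d t hd ht ↦ ?_⟩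
  have ht' : (1 / 2 + δ) * d ≤ t := (mul_le_mul_of_nonneg_right hδr d.cast_nonneg).trans ht
  refine ⟨sub_mul_choose_mul_half_pow_le hδ ht', fun n Ω _ μ X hX hindep hsymm hunit ↦ ?_⟩
  have : Nonempty (Fin d) := Fin.pos_iff_nonempty.mp hd
  have hmask := integral_sum_sq_andMask_mul_mean_le_exp hδ (by simpa using ht') hX hindep hsymm
    hunit
  have hmean := integral_sum_sq_mean_eq_card_div_card hX hindep hsymm hunit
  simp only [Fintype.card_fin] at hmask hmean
  exact ⟨hmask, hmean⟩

/-- for every fixed ratio `r ∈ (1/2, 1]` there are constants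
`c ∈ (1, 2]` and `K > 0` such that for all `d`, with threshold `t = ⌈r d⌉`, one has
`(d − t) C(d,t) (1/2)^{d−1} ≤ K / c^d`; consequently, for independent standard
Gaussian gradient vectors in `ℝⁿ`, the expected squared norm of the AND-masked
average gradient is `O(n / c^d)` (exponential decay), whereas the expected squared
norm of the plain average gradient equals `n/d` (linear decay). -/
theorem and_mask_exponential_decay_of_random_gradients
    (r : ℝ) (hr1 : 1 / 2 < r) (hr2 : r ≤ 1) :
    ∃ c K : ℝ, 1 < c ∧ c ≤ 2 ∧ 0 < K ∧
      ∀ d : ℕ, 0 < d →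
        (((d : ℝ) - (⌈r * d⌉₊ : ℝ)) * (d.choose ⌈r * d⌉₊ : ℝ) * (1 / 2 : ℝ) ^ (d - 1)
            ≤ K / c ^ d) ∧
        ∀ (n : ℕ) (Ω : Type) [MeasurableSpace Ω] (μ : Measure Ω),
          IsProbabilityMeasure μ →
          ∀ (X : Fin d → Fin n → Ω → ℝ),
            (∀ e j, Measurable (X e j)) →
            iIndepFun
              (fun p : Fin d × Fin n => X p.1 p.2) μ →
            (∀ e j, Measure.map (X e j) μ = gaussianReal 0 1) →
            (∫ ω, ∑ j : Fin n,
                (if ⌈r * d⌉₊ ≤ (Finset.univ.filter fun e => 0 < X e j ω).card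
                    ∨ ⌈r * d⌉₊ ≤ (Finset.univ.filter fun e => X e j ω < 0).card
                  then ((1 / (d : ℝ)) * ∑ e : Fin d, X e j ω) ^ 2 else 0) ∂μ
                ≤ K * (n : ℝ) / c ^ d)
            ∧ ∫ ω, ∑ j : Fin n, ((1 / (d : ℝ)) * ∑ e : Fin d, X e j ω) ^ 2 ∂μ
                = (n : ℝ) / d := by
  obtain ⟨c, K, hc_gt, hc_le, hK, hbound⟩ :=
    and_mask_exponential_decay_of_random_gradients_general hr1
  refine ⟨c, K, hc_gt, hc_le, hK, fun d hd ↦ ?_⟩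
  obtain ⟨hchoose, hgrad⟩ := hbound d ⌈r * d⌉₊ hd (Nat.le_ceil _)
  refine ⟨hchoose, fun n Ω _ μ _ X hX hindep hmap ↦ ?_⟩
  have hlaw (e : Fin d) (j : Fin n) : HasLaw (X e j) (gaussianReal 0 1) μ :=
    ⟨(hX e j).aemeasurable, hmap e j⟩
  have hcol (j : Fin n) : iIndepFun (fun e ↦ X e j) μ :=
    hindep.precomp (g := fun e ↦ (e, j)) (Prod.mk_left_injective j)
  simpa only [andMask, ite_mul, one_mul, zero_mul, ite_pow, zero_pow two_ne_zero] using
    hgrad n Ω μ X (fun e j ↦ (hlaw e j).hasGaussianLaw.memLp_two) hcol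
      (fun e j ↦ hmap e j ▸ isNegInvariant_gaussianReal_zero 1)
      (fun e j ↦ integral_sq_eq_of_hasLaw_gaussianReal_zero (hlaw e j))
end

section
/- Let a_1, …, a_n and b_1, …, b_n be strictly positive reals, define L_A(θ) = (1/2) Σ_i a_i θ_i² and L_B(θ) = (1/2) Σ_i b_i θ_i², and for ε > 0 define the inconsistency score I^ε(0) = max{ sup{L_B(θ) : L_A(θ) ≤ ε}, sup{L_A(θ) : L_B(θ) ≤ ε} }. Then I^ε(0) = ε · max_{1 ≤ i ≤ n} max{ b_i / a_i, a_i / b_i }. -/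
/-!
Coordinatewise, `b i ≤ (⨆ j, b j / a j) * a i`, so `L_B ≤ (⨆ j, b j / a j) * L_A`, and this bound is
attained on the level set `L_A = ε` by a vector supported on a single coordinate at which `b / a` is
maximal.
-/

/-- The inconsistency score `I^ε` of a common minimizer, with minimum value `0`, of the losses `L_A`
and `L_B`. The suprema are real-valued, so they take the junk value `0` if a loss is unbounded on
the other's sublevel set. -/
noncomputable def inconsistencyScore {E : Type*} (L_A L_B : E → ℝ) (ε : ℝ) : ℝ :=
  max (sSup {v : ℝ | ∃ θ, L_A θ ≤ ε ∧ v = L_B θ}) (sSup {v : ℝ | ∃ θ, L_B θ ≤ ε ∧ v = L_A θ})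

section DiagonalQuadratic

variable {ι : Type*} [Fintype ι]

/-- The quadratic loss on `ι → ℝ` whose Hessian is the diagonal matrix with entries `c`. -/
noncomputable def diagonalQuadratic (c θ : ι → ℝ) : ℝ :=
  (1 / 2) * ∑ i, c i * θ i ^ 2

theorem diagonalQuadratic_le_mul {a b : ι → ℝ} {r : ℝ} (h : ∀ i, b i ≤ r * a i) (θ : ι → ℝ) :
    diagonalQuadratic b θ ≤ r * diagonalQuadratic a θ :=
  calc (1 / 2) * ∑ i, b i * θ i ^ 2
      ≤ (1 / 2) * ∑ i, r * a i * θ i ^ 2 := by gcongr with i; exact h i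
    _ = r * ((1 / 2) * ∑ i, a i * θ i ^ 2) := by
      simp only [mul_assoc, ← Finset.mul_sum]
      ring

theorem diagonalQuadratic_single [DecidableEq ι] (c : ι → ℝ) (i : ι) (t : ℝ) :
    diagonalQuadratic c (Pi.single i t) = (1 / 2) * (c i * t ^ 2) := by
  simp [diagonalQuadratic, Pi.single_apply, ite_pow]

theorem diagonalQuadratic_single_sqrt [DecidableEq ι] (c : ι → ℝ) (i : ι) {r ε : ℝ}
    (hr : 0 < r) (hε : 0 ≤ ε) :
    diagonalQuadratic c (Pi.single i √(2 * ε / r)) = ε * (c i / r) := by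
  rw [diagonalQuadratic_single, Real.sq_sqrt (by positivity)]
  ring

theorem isGreatest_diagonalQuadratic_sublevel [Nonempty ι] {a b : ι → ℝ} {ε : ℝ}
    (ha : ∀ i, 0 < a i) (hba : 0 ≤ ⨆ i, b i / a i) (hε : 0 ≤ ε) :
    IsGreatest {v : ℝ | ∃ θ, diagonalQuadratic a θ ≤ ε ∧ v = diagonalQuadratic b θ}
      (ε * ⨆ i, b i / a i) := by
  classical
  constructor
  · obtain ⟨j, hj⟩ := exists_eq_ciSup_of_finite (f := fun i => b i / a i)
    refine ⟨Pi.single j √(2 * ε / a j), ?_, ?_⟩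
    · rw [diagonalQuadratic_single_sqrt a j (ha j) hε, div_self (ha j).ne', mul_one]
    · rw [diagonalQuadratic_single_sqrt b j (ha j) hε, hj]
  · rintro _ ⟨θ, hθ, rfl⟩
    have coeff_le (i : ι) : b i ≤ (⨆ j, b j / a j) * a i :=
      (div_le_iff₀ (ha i)).1 (Finite.le_ciSup (fun j => b j / a j) i)
    calc diagonalQuadratic b θ
        ≤ (⨆ i, b i / a i) * diagonalQuadratic a θ := diagonalQuadratic_le_mul coeff_le θ
      _ ≤ (⨆ i, b i / a i) * ε := by gcongr
      _ = ε * ⨆ i, b i / a i := mul_comm _ _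

end DiagonalQuadratic

theorem inconsistency_score_diagonal_quadratics_general {ι : Type*} [Fintype ι] [Nonempty ι]
    {a b : ι → ℝ} (ha : ∀ i, 0 < a i) (hb : ∀ i, 0 < b i) {ε : ℝ} (hε : 0 ≤ ε) :
    inconsistencyScore (diagonalQuadratic a) (diagonalQuadratic b) ε =
      ε * ⨆ i, max (b i / a i) (a i / b i) := by
  have hba : 0 ≤ ⨆ i, b i / a i := Real.iSup_nonneg fun i => (div_pos (hb i) (ha i)).le
  have hab : 0 ≤ ⨆ i, a i / b i := Real.iSup_nonneg fun i => (div_pos (ha i) (hb i)).le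
  rw [inconsistencyScore, (isGreatest_diagonalQuadratic_sublevel ha hba hε).csSup_eq,
    (isGreatest_diagonalQuadratic_sublevel hb hab hε).csSup_eq,
    ciSup_sup_eq (Finite.bddAbove_range _) (Finite.bddAbove_range _), mul_max_of_nonneg _ _ hε]

/-- for two diagonal quadratic losses `L_A(θ) = (1/2) Σ a_i θ_i²` and
`L_B(θ) = (1/2) Σ b_i θ_i²` with strictly positive coefficients, the inconsistency
score `I^ε(0) = max{sup{L_B : L_A ≤ ε}, sup{L_A : L_B ≤ ε}}` equals
`ε · max_i max{b_i/a_i, a_i/b_i}`. -/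
theorem inconsistency_score_diagonal_quadratics
    (n : ℕ) (hn : 0 < n) (a b : Fin n → ℝ)
    (ha : ∀ i, 0 < a i) (hb : ∀ i, 0 < b i)
    (ε : ℝ) (hε : 0 < ε) :
    max
      (sSup {v : ℝ | ∃ θ : Fin n → ℝ,
        (1 / 2) * ∑ i, a i * θ i ^ 2 ≤ ε ∧ v = (1 / 2) * ∑ i, b i * θ i ^ 2})
      (sSup {v : ℝ | ∃ θ : Fin n → ℝ,
        (1 / 2) * ∑ i, b i * θ i ^ 2 ≤ ε ∧ v = (1 / 2) * ∑ i, a i * θ i ^ 2})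
      = ε * ⨆ i, max (b i / a i) (a i / b i) := by
  have : Nonempty (Fin n) := Fin.pos_iff_nonempty.mp hn
  exact inconsistency_score_diagonal_quadratics_general ha hb hε.le
end
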